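/- arXiv:2301.05769 — 4 statements merged into one kernel-verified Lean document; each statement's English description precedes it below -/
import Mathlib

section
/- Let L be a field of characteristic 0, let δ be a derivation on L, and let K be a subfield of L that is closed under δ (i.e., δ(x) ∈ K for every x ∈ K). Then the relative algebraic closure of K in L, i.e., the set of all elements of L that are algebraic over K, is also closed under δ: for every y ∈ L, if y is algebraic over K then δ(y) is algebraic over K. -/
/-!
If `E / K` is a separable algebraic extension, then `Ω[E⁄K] = 0`, so a derivation on `E` with values
in any `E`-module vanishes as soon as it vanishes on `K`. For a derivation `D` of a larger field `L`
that maps `K` into `E`, the composite `E → L → L ⧸ E` is such a derivation; hence it is zero, which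
says that `D` maps `E` into `E`. Take for `E` the relative separable closure of `K` in `L`, which in
characteristic zero is the relative algebraic closure.
-/

section FormallyUnramified

variable {R A B M : Type*} [CommSemiring R] [CommRing A] [CommRing B] [Algebra R B] [Algebra A B]
  [Algebra.FormallyUnramified A B] [AddCommGroup M] [Module B M] [Module R M]

theorem derivation_eq_zero_of_formallyUnramified (D : Derivation R B M)
    (hD : ∀ a : A, D (algebraMap A B a) = 0) : D = 0 := by
  let _ : Module A M := Module.compHom M (algebraMap A B)
  have : IsScalarTower A B M := .of_algebraMap_smul fun _ _ ↦ rfl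
  let D' : Derivation A B M := Derivation.mk'
    { toFun := D
      map_add' := D.map_add
      map_smul' a b := by simp [Algebra.smul_def, hD] } D.leibniz
  have hD' : D' = 0 := (Derivation.liftKaehlerDifferential_comp D').symm.trans <| by
    rw [Subsingleton.elim D'.liftKaehlerDifferential 0]
    ext
    simp
  exact Derivation.ext fun b ↦ congr($hD' b)

theorem derivation_mem_of_formallyUnramified [IsScalarTower R B M] (D : Derivation R B M)
    (N : Submodule B M) (hD : ∀ a : A, D (algebraMap A B a) ∈ N) (b : B) : D b ∈ N := by
  have h : N.mkQ.compDer D = 0 :=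
    derivation_eq_zero_of_formallyUnramified (A := A) _ fun a ↦
      (Submodule.Quotient.mk_eq_zero N).2 (hD a)
  exact (Submodule.Quotient.mk_eq_zero N).1 congr($h b)

end FormallyUnramified

section Field

variable {K L : Type*} [Field K] [Field L] [Algebra K L] (D : Derivation ℤ L L)

theorem derivation_mem_intermediateField_of_isSeparable (E : IntermediateField K L)
    [Algebra.IsSeparable K E] (hD : ∀ a : K, D (algebraMap K L a) ∈ E) {x : L} (hx : x ∈ E) :
    D x ∈ E := by
  have : Algebra.FormallyUnramified K E := .of_isSeparable K E
  have mem_range_iff (z : L) : z ∈ LinearMap.range (Algebra.linearMap E L) ↔ z ∈ E := by simp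
  rw [← mem_range_iff]
  exact derivation_mem_of_formallyUnramified (A := K) (D.compAlgebraMap E) _
    (fun a ↦ (mem_range_iff _).2 (hD a)) ⟨x, hx⟩

theorem derivation_isAlgebraic_of_isAlgebraic_general
    (hD : ∀ a : K, IsSeparable K (D (algebraMap K L a))) {y : L} (hy : IsSeparable K y) :
    IsSeparable K (D y) :=
  derivation_mem_intermediateField_of_isSeparable D (separableClosure K L) hD hy

end Field

theorem derivation_isAlgebraic_of_isAlgebraic
    (L : Type*) [Field L] [CharZero L]
    (δ : L → L)
    (hadd : ∀ x y : L, δ (x + y) = δ x + δ y)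
    (hmul : ∀ x y : L, δ (x * y) = x * δ y + y * δ x)
    (K : Subfield L) (hK : ∀ x ∈ K, δ x ∈ K)
    (y : L) (hy : IsAlgebraic K y) :
    IsAlgebraic K (δ y) := by
  let D : Derivation ℤ L L := .mk' (AddMonoidHom.mk' δ hadd).toIntLinearMap hmul
  have hD (a : K) : IsSeparable K (D a) := isSeparable_algebraMap (⟨δ a, hK a a.2⟩ : K)
  have hy_sep : IsSeparable K y := (minpoly.irreducible hy.isIntegral).separable
  exact (derivation_isAlgebraic_of_isAlgebraic_general D hD hy_sep).isIntegral.isAlgebraic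
end

section
/- Let F ⊆ K be fields of characteristic 0 and let n be a positive integer. If every element t ∈ K is algebraic over F with minimal polynomial of degree at most n, then K is a finite extension of F with [K : F] ≤ n. -/
/-!
By the primitive element theorem, an element `α` of maximal degree generates a separable extension
`K` of `F`: for every `β` the field `F⟮α, β⟯` equals `F⟮γ⟯` for some `γ`, whose degree is at most
that of `α`, so `F⟮α, β⟯ = F⟮α⟯` and `β ∈ F⟮α⟯`. Degrees being bounded, such an `α` exists.
-/

open IntermediateField

section

variable {F K : Type*} [Field F] [Field K] [Algebra F K]

theorem exists_adjoin_simple_eq (E : IntermediateField F K) [FiniteDimensional F E]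
    [Algebra.IsSeparable F E] : ∃ γ : K, F⟮γ⟯ = E := by
  obtain ⟨γ, hγ⟩ := Field.exists_primitive_element F E
  exact ⟨γ, by rw [← lift_adjoin_simple, hγ, lift_top]⟩

variable [Algebra.IsSeparable F K]

theorem adjoin_simple_eq_top_of_forall_natDegree_minpoly_le {α : K}
    (hα : ∀ β : K, (minpoly F β).natDegree ≤ (minpoly F α).natDegree) : F⟮α⟯ = ⊤ := by
  have isIntegral : ∀ β : K, IsIntegral F β := Algebra.IsSeparable.isIntegral F
  refine eq_top_iff.2 fun β _ ↦ ?_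
  have : FiniteDimensional F F⟮α, β⟯ := finiteDimensional_adjoin fun x _ ↦ isIntegral x
  obtain ⟨γ, hγ⟩ := exists_adjoin_simple_eq F⟮α, β⟯
  have finrank_le : Module.finrank F F⟮α, β⟯ ≤ Module.finrank F F⟮α⟯ := by
    rw [← hγ, adjoin.finrank (isIntegral γ), adjoin.finrank (isIntegral α)]
    exact hα γ
  have adjoin_eq : F⟮α⟯ = F⟮α, β⟯ :=
    eq_of_le_of_finrank_le (adjoin_simple_le_iff.2 (mem_adjoin_pair_left F α β)) finrank_le
  exact adjoin_eq ▸ mem_adjoin_pair_right F α β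

theorem finite_extension_of_bounded_degrees_general {n : ℕ}
    (h : ∀ t : K, (minpoly F t).natDegree ≤ n) :
    FiniteDimensional F K ∧ Module.finrank F K ≤ n := by
  obtain ⟨_, ⟨α, rfl⟩, hα⟩ := BddAbove.exists_isGreatest_of_nonempty
    (S := Set.range fun t : K ↦ (minpoly F t).natDegree)
    ⟨n, Set.forall_mem_range.2 h⟩ (Set.range_nonempty _)
  have adjoin_eq_top : F⟮α⟯ = ⊤ :=
    adjoin_simple_eq_top_of_forall_natDegree_minpoly_le (Set.forall_mem_range.1 hα)
  refine ⟨Field.FiniteDimensional.of_exists_primitive_element F K ⟨α, adjoin_eq_top⟩, ?_⟩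
  calc Module.finrank F K = Module.finrank F F⟮α⟯ := by rw [adjoin_eq_top, finrank_top']
    _ = (minpoly F α).natDegree := adjoin.finrank (Algebra.IsSeparable.isIntegral F α)
    _ ≤ n := h α

end

theorem finite_extension_of_bounded_degrees
    (K : Type*) [Field K] [CharZero K] (F : Subfield K)
    (n : ℕ) (hn : 0 < n)
    (h : ∀ t : K, IsIntegral F t ∧ (minpoly F t).natDegree ≤ n) :
    FiniteDimensional F K ∧ Module.finrank F K ≤ n := by
  have : Algebra.IsIntegral F K := ⟨fun t ↦ (h t).1⟩
  exact finite_extension_of_bounded_degrees_general fun t ↦ (h t).2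
end

section
/- Let K be an algebraically closed field of characteristic 0 and let G be a finite subgroup of the group of ring automorphisms of K. Then every element σ ∈ G satisfies σ ∘ σ = id, and G is commutative (hence G is an elementary abelian 2-group). -/
/-!
An automorphism `σ` of prime order `p` of a separably closed field `K` makes `K` a cyclic extension
of degree `p` of its fixed field `F`. Traces and norms carry solutions of equations from `K` to `F`.

* If `K` has characteristic `p`, then `y ↦ y ^ p - y` is surjective on `K` and commutes with the
  trace, hence is surjective on `F`. Some `θ` satisfies `σ θ = θ + 1`, and `θ ^ p - θ`, being fixed
  by `σ`, equals `t ^ p - t` with `t ∈ F`; so `θ - t` lies in the prime field and `σ θ = θ`, a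
  contradiction.
* Otherwise `K = F(α)` with `α ^ p = a ∈ F`, by Kummer theory. Writing `α = β ^ p`, the norm
  `(-1) ^ (p + 1) * a` of `α` is a `p`-th power in `F`, while `a` is not. Hence `p = 2`, and `-1` is
  not a square in `F`: `σ` moves `√-1`.

The square of an automorphism of order four would be of order two and fix `√-1`. So every
automorphism of finite order squares to the identity.
-/

open Module Polynomial
open scoped IntermediateField

theorem exists_apply_ne_zero_and_apply_apply_eq_zero {R M : Type*} [Semiring R] [AddCommMonoid M]
    [Module R M] {N : End R M} (hN : IsNilpotent N) (hN₀ : N ≠ 0) :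
    ∃ v, N v ≠ 0 ∧ N (N v) = 0 := by
  have : Nontrivial (End R M) := ⟨N, 0, hN₀⟩
  have hpos : 0 < nilpotencyClass N := pos_nilpotencyClass_iff.2 hN
  have hne : nilpotencyClass N ≠ 1 := mt nilpotencyClass_eq_one.1 hN₀
  obtain ⟨k, hk⟩ : ∃ k, nilpotencyClass N = k + 1 + 1 := ⟨nilpotencyClass N - 2, by lia⟩
  obtain ⟨hzero, hnonzero⟩ := nilpotencyClass_eq_succ_iff.1 hk
  obtain ⟨w, hw⟩ := DFunLike.ne_iff.1 hnonzero
  refine ⟨(N ^ k) w, ?_, ?_⟩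
  · simpa only [pow_succ', End.mul_apply, LinearMap.zero_apply] using hw
  · simpa only [pow_succ', End.mul_apply, LinearMap.zero_apply] using LinearMap.congr_fun hzero w

section Extension

variable {F K : Type*} [Field F] [Field K] [Algebra F K]

section Additive

variable (p : ℕ) [Fact p.Prime] [CharP F p]

theorem trace_pow_char [FiniteDimensional F K] [IsGalois F K] (x : K) :
    Algebra.trace F K (x ^ p) = Algebra.trace F K x ^ p := by
  have : CharP K p := charP_of_injective_algebraMap (algebraMap F K).injective p
  apply (algebraMap F K).injective
  simp only [map_pow, trace_eq_sum_automorphisms, sum_pow_char]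

variable (K) in
theorem exists_pow_char_sub_self_eq [FiniteDimensional F K] [IsGalois F K] [IsSepClosed K]
    (a : F) : ∃ t : F, t ^ p - t = a := by
  have : CharP K p := charP_of_injective_algebraMap (algebraMap F K).injective p
  obtain ⟨x, hx⟩ := Algebra.trace_surjective F K a
  obtain ⟨y, hy⟩ := IsSepClosed.exists_root_C_mul_X_pow_add_C_mul_X_add_C' p p 1 (-1) (-x)
    dvd_rfl (Fact.out : p.Prime).two_le (neg_ne_zero.2 one_ne_zero)
  have hyx : y ^ p - y = x := by linear_combination hy
  exact ⟨Algebra.trace F K y, by rw [← trace_pow_char, ← map_sub, hyx, hx]⟩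

theorem exists_apply_eq_add_one_of_orderOf_eq_char {σ : Gal(K/F)} (hσ : orderOf σ = p) :
    ∃ θ : K, σ θ = θ + 1 := by
  have hnil : IsNilpotent (σ.toLinearMap - 1) := by
    have : CharP (End F K) p :=
      charP_of_injective_algebraMap (algebraMap F (End F K)).injective p
    refine ⟨p, ?_⟩
    rw [sub_pow_char_of_commute _ (Commute.one_right _), one_pow, ← AlgEquiv.pow_toLinearMap,
      ← hσ, pow_orderOf_eq_one]
    exact sub_self _
  have hne : σ.toLinearMap - 1 ≠ 0 := by
    rw [sub_ne_zero]
    intro h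
    have hσ₁ : σ = 1 := AlgEquiv.toLinearMap_injective h
    exact (Fact.out : p.Prime).ne_one (by rw [← hσ, hσ₁, orderOf_one])
  obtain ⟨y, hy, hyy⟩ := exists_apply_ne_zero_and_apply_apply_eq_zero hnil hne
  set s := (σ.toLinearMap - 1) y with hs
  have hσy : σ y = y + s := by simp [hs]
  have hσs : σ s = s := by simpa [sub_eq_zero] using hyy
  exact ⟨y / s, by rw [map_div₀, hσy, hσs, add_div, div_self hy]⟩

end Additive

theorem mem_range_algebraMap_of_apply_eq_self [FiniteDimensional F K] [IsGalois F K]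
    {σ : Gal(K/F)} (hσ : ∀ τ, τ ∈ Subgroup.zpowers σ) {x : K} (hx : σ x = x) :
    x ∈ Set.range (algebraMap F K) := by
  have hle : Subgroup.zpowers σ ≤ MulAction.stabilizer Gal(K/F) x := by simpa using hx
  exact (IsGalois.mem_range_algebraMap_iff_fixed x).2 fun τ => hle (hσ τ)

theorem natCast_finrank_ne_zero_of_prime [IsGalois F K] [IsSepClosed K]
    (hp : (finrank F K).Prime) : (finrank F K : F) ≠ 0 := by
  intro hchar
  set p := finrank F K
  have : Fact p.Prime := ⟨hp⟩
  have : FiniteDimensional F K := .of_finrank_pos hp.pos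
  have : CharP F p := (CharP.charP_iff_prime_eq_zero hp).2 hchar
  have : CharP K p := charP_of_injective_algebraMap (algebraMap F K).injective p
  have hcard : Nat.card Gal(K/F) = p := IsGalois.card_aut_eq_finrank F K
  obtain ⟨σ, hσ⟩ := (isCyclic_of_prime_card hcard).exists_generator
  obtain ⟨θ, hθ⟩ := exists_apply_eq_add_one_of_orderOf_eq_char p
    ((orderOf_eq_card_of_forall_mem_zpowers hσ).trans hcard)
  obtain ⟨a, ha⟩ : θ ^ p - θ ∈ Set.range (algebraMap F K) :=
    mem_range_algebraMap_of_apply_eq_self hσ (by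
      rw [map_sub, map_pow, hθ, add_pow_char, one_pow, add_sub_add_right_eq_sub])
  obtain ⟨t, ht⟩ := exists_pow_char_sub_self_eq K p a
  have hpow : (θ - algebraMap F K t) ^ p = θ - algebraMap F K t := by
    rw [sub_pow_char, ← map_pow, ← sub_eq_zero]
    linear_combination -ha - congrArg (algebraMap F K) ht + map_sub (algebraMap F K) (t ^ p) t
  obtain ⟨n, hn⟩ := (mem_bot_iff_intCast p K).1 ((Subfield.mem_bot_iff_pow_eq_self K p).2 hpow)
  have hfix : σ (θ - algebraMap F K t) = θ - algebraMap F K t := by rw [← hn, map_intCast]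
  rw [map_sub, σ.commutes, hθ] at hfix
  exact one_ne_zero (by linear_combination hfix)

theorem mem_range_algebraMap_of_isPrimitiveRoot_finrank (hp : (finrank F K).Prime) {ζ : K}
    (hζ : IsPrimitiveRoot ζ (finrank F K)) : ζ ∈ Set.range (algebraMap F K) := by
  have : FiniteDimensional F K := .of_finrank_pos hp.pos
  have hdvd : (minpoly F ζ).natDegree ∣ finrank F K := minpoly.degree_dvd (.of_finite F ζ)
  have hlt : (minpoly F ζ).natDegree < finrank F K := by
    have hroot : aeval ζ (cyclotomic (finrank F K) F) = 0 := by
      rw [aeval_def, eval₂_eq_eval_map, map_cyclotomic]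
      exact hζ.isRoot_cyclotomic hp.pos
    calc (minpoly F ζ).natDegree
        ≤ (cyclotomic (finrank F K) F).natDegree :=
          natDegree_le_of_dvd (minpoly.dvd F ζ hroot) (cyclotomic_ne_zero _ F)
      _ = (finrank F K).totient := natDegree_cyclotomic _ F
      _ < finrank F K := Nat.totient_lt _ hp.one_lt
  rw [← RingHom.coe_range, SetLike.mem_coe, ← minpoly.natDegree_eq_one_iff]
  exact (hp.eq_one_or_self_of_dvd _ hdvd).resolve_right hlt.ne

theorem norm_eq_of_pow_finrank_eq [FiniteDimensional F K] {a : F} {α : K}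
    (ha : α ^ finrank F K = algebraMap F K a) (hα : F⟮α⟯ = ⊤) :
    Algebra.norm F α = (-1) ^ (finrank F K + 1) * a := by
  have hint : IsIntegral F α := .of_finite F α
  have hminpoly : minpoly F α = X ^ finrank F K - C a :=
    (minpoly.eq_of_irreducible_of_monic (irreducible_X_pow_sub_C_of_root_adjoin_eq_top ha hα)
      (by simp [ha]) (monic_X_pow_sub_C a finrank_pos.ne')).symm
  have hadjoin : Algebra.adjoin F {α} = ⊤ := by
    rw [← IntermediateField.adjoin_simple_toSubalgebra_of_isAlgebraic hint.isAlgebraic, hα,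
      IntermediateField.top_toSubalgebra]
  have hnorm := Algebra.PowerBasis.norm_gen_eq_coeff_zero_minpoly
    (PowerBasis.ofAdjoinEqTop hint hadjoin)
  rw [PowerBasis.ofAdjoinEqTop_gen, PowerBasis.ofAdjoinEqTop_dim, hminpoly,
    natDegree_X_pow_sub_C] at hnorm
  rw [hnorm, coeff_sub, coeff_X_pow, if_neg finrank_pos.ne, coeff_C_zero]
  ring

theorem pow_finrank_ne_neg_one_pow [IsGalois F K] [IsSepClosed K]
    (hp : (finrank F K).Prime) (ε : F) : ε ^ finrank F K ≠ (-1) ^ (finrank F K + 1) := by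
  intro hε
  have : FiniteDimensional F K := .of_finrank_pos hp.pos
  have hchar : (finrank F K : K) ≠ 0 := by
    simpa using (algebraMap F K).injective.ne (natCast_finrank_ne_zero_of_prime hp)
  have : NeZero (finrank F K : K) := ⟨hchar⟩
  have : Fact (finrank F K).Prime := ⟨hp⟩
  have : IsCyclic Gal(K/F) := isCyclic_of_prime_card (IsGalois.card_aut_eq_finrank F K)
  have hroots : (primitiveRoots (finrank F K) F).Nonempty := by
    obtain ⟨ζ, hζ⟩ := HasEnoughRootsOfUnity.exists_primitiveRoot K (finrank F K)
    obtain ⟨z, rfl⟩ := mem_range_algebraMap_of_isPrimitiveRoot_finrank hp hζ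
    exact ⟨z, (mem_primitiveRoots hp.pos).2 (hζ.of_map_of_injective (algebraMap F K).injective)⟩
  obtain ⟨α, ⟨a, ha⟩, hα⟩ := exists_root_adjoin_eq_top_of_isCyclic F K hroots
  obtain ⟨β, hβ⟩ := IsSepClosed.exists_pow_nat_eq α (finrank F K)
  have hnorm : Algebra.norm F β ^ finrank F K = (-1) ^ (finrank F K + 1) * a := by
    rw [← map_pow, hβ, norm_eq_of_pow_finrank_eq ha.symm hα]
  refine (X_pow_sub_C_irreducible_iff_of_prime hp).1
    (irreducible_X_pow_sub_C_of_root_adjoin_eq_top ha.symm hα) (ε * Algebra.norm F β) ?_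
  rw [mul_pow, hε, hnorm, ← mul_assoc, ← mul_pow, neg_one_mul, neg_neg, one_pow, one_mul]

theorem finrank_eq_two_and_not_isSquare_neg_one [IsGalois F K] [IsSepClosed K]
    (hp : (finrank F K).Prime) : finrank F K = 2 ∧ ¬IsSquare (-1 : F) := by
  have htwo : finrank F K = 2 := by
    by_contra hne
    refine pow_finrank_ne_neg_one_pow hp 1 ?_
    rw [one_pow, (hp.odd_of_ne_two hne).add_one.neg_one_pow]
  refine ⟨htwo, fun ⟨i, hi⟩ => pow_finrank_ne_neg_one_pow hp i ?_⟩
  rw [htwo, pow_two, ← hi]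
  norm_num

end Extension

section Automorphism

variable {K : Type*} [Field K] [IsSepClosed K]

variable (K) in
theorem exists_sq_eq_neg_one : ∃ i : K, i ^ 2 = -1 := by
  by_cases h : (2 : K) = 0
  · exact ⟨1, by linear_combination h⟩
  · have : NeZero ((2 : ℕ) : K) := ⟨by exact_mod_cast h⟩
    exact IsSepClosed.exists_pow_nat_eq (-1) 2

variable {σ : K ≃+* K}

theorem orderOf_eq_two_and_apply_ne_self (hσ : (orderOf σ).Prime) :
    orderOf σ = 2 ∧ ∀ i : K, i ^ 2 = -1 → σ i ≠ i := by
  let F := FixedPoints.subfield (Subgroup.zpowers σ) K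
  have : Finite (Subgroup.zpowers σ) := (orderOf_pos_iff.1 hσ.pos).finite_zpowers
  have := Fintype.ofFinite (Subgroup.zpowers σ)
  have hdeg : finrank F K = orderOf σ := by
    rw [FixedPoints.finrank_eq_card, ← Nat.card_eq_fintype_card, Nat.card_zpowers]
  obtain ⟨htwo, hsq⟩ := finrank_eq_two_and_not_isSquare_neg_one (F := F) (K := K) (hdeg ▸ hσ)
  refine ⟨hdeg ▸ htwo, fun i hi hfix => hsq ?_⟩
  have hmem : i ∈ F := by
    rintro ⟨τ, hτ⟩
    have hle : Subgroup.zpowers σ ≤ MulAction.stabilizer (K ≃+* K) i := by simpa using hfix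
    exact hle hτ
  exact ⟨⟨i, hmem⟩, Subtype.ext (by simpa [pow_two] using hi.symm)⟩

theorem orderOf_ne_four : orderOf σ ≠ 4 := by
  intro hσ
  have hsq : orderOf (σ ^ 2) = 2 := by
    rw [orderOf_pow_of_dvd two_ne_zero (by rw [hσ]; norm_num), hσ]
  obtain ⟨i, hi⟩ := exists_sq_eq_neg_one K
  have hσi : σ i = i ∨ σ i = -i :=
    sq_eq_sq_iff_eq_or_eq_neg.1 (by rw [← map_pow, hi, map_neg, map_one])
  refine (orderOf_eq_two_and_apply_ne_self (hsq ▸ Nat.prime_two)).2 i hi ?_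
  change σ (σ i) = i
  rcases hσi with h | h
  · rw [h, h]
  · rw [h, map_neg, h, neg_neg]

theorem mul_self_eq_one_of_isOfFinOrder (hσ : IsOfFinOrder σ) : σ * σ = 1 := by
  have hdiv {d : ℕ} (hd : d ∣ orderOf σ) : orderOf (σ ^ (orderOf σ / d)) = d :=
    orderOf_pow_orderOf_div hσ.orderOf_pos.ne' hd
  have hle : orderOf σ ≤ 2 := by
    by_contra! hlt
    rcases Nat.four_dvd_or_exists_odd_prime_and_dvd_of_two_lt hlt with hd | ⟨p, hp, hd, hodd⟩
    · exact orderOf_ne_four (hdiv hd)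
    · have htwo := (orderOf_eq_two_and_apply_ne_self ((hdiv hd).symm ▸ hp)).1
      rw [hdiv hd] at htwo
      exact Nat.not_odd_iff_even.2 even_two (htwo ▸ hodd)
  have hpos := hσ.orderOf_pos
  rw [← pow_two, ← orderOf_dvd_iff_pow_eq_one]
  interval_cases orderOf σ <;> norm_num

end Automorphism

theorem finite_automorphism_group_elementary_abelian_two_general
    (K : Type*) [Field K] [IsSepClosed K] (G : Subgroup (K ≃+* K)) (hG : IsMulTorsion G) :
    (∀ σ ∈ G, σ * σ = 1) ∧ (∀ σ ∈ G, ∀ τ ∈ G, σ * τ = τ * σ) := by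
  have hsq : ∀ σ ∈ G, σ * σ = 1 := fun σ hσ =>
    mul_self_eq_one_of_isOfFinOrder (Submonoid.isOfFinOrder_coe.2 (hG ⟨σ, hσ⟩))
  have hdvd : ∀ σ : G, orderOf σ ∣ 2 := fun σ =>
    orderOf_dvd_of_pow_eq_one (Subtype.ext ((pow_two _).trans (hsq σ σ.2)))
  exact ⟨hsq, fun σ hσ τ hτ =>
    congrArg Subtype.val (Commute.of_orderOf_dvd_two hdvd ⟨σ, hσ⟩ ⟨τ, hτ⟩)⟩

theorem finite_automorphism_group_elementary_abelian_two
    (K : Type*) [Field K] [IsAlgClosed K] [CharZero K]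
    (G : Subgroup (K ≃+* K)) (hG : Finite G) :
    (∀ σ ∈ G, σ * σ = 1) ∧ (∀ σ ∈ G, ∀ τ ∈ G, σ * τ = τ * σ) :=
  finite_automorphism_group_elementary_abelian_two_general K G isMulTorsion_of_finite
end

section
/- Every algebraically closed field K of characteristic 0 has a proper subfield F such that K is an algebraic extension of F of degree 2, i.e., [K : F] = 2. -/
/-!
By Artin's theorem a field automorphism of order 2 has a fixed field of index 2, so it suffices to
find an involution of `K`. Choose a transcendence basis `B` of `K` over `ℚ` and an ultrafilter on
`B → ℚ` containing every set `{x | p x ≠ 0}` with `p ≠ 0` a polynomial. In the corresponding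
ultrapower of `ℂ`, which is algebraically closed, the classes of the coordinate functions are
algebraically independent over `ℚ` and fixed by the involution that complex conjugation induces.
Sending `B` to these classes embeds `K` into the ultrapower, and since `K` is normal over `ℚ(B)` the
involution restricts to `K`. It moves `√-1`, so it stays nontrivial.
-/

open Filter IntermediateField

theorem finrank_fixedPoints_zpowers {K : Type*} [Field K] {τ : RingAut K} (hτ : IsOfFinOrder τ) :
    Module.finrank (FixedPoints.subfield (Subgroup.zpowers τ) K) K = orderOf τ := by
  have : Finite (Subgroup.zpowers τ) := hτ.finite_zpowers
  have := Fintype.ofFinite (Subgroup.zpowers τ)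
  rw [FixedPoints.finrank_eq_card, Fintype.card_eq_nat_card, Nat.card_zpowers]

theorem exists_algHom_adjoin_of_algebraicIndependent {ι k K C : Type*} [Field k] [Field K] [Field C]
    [Algebra k K] [Algebra k C] {v : ι → K} {x : ι → C} (hv : AlgebraicIndependent k v)
    (hx : AlgebraicIndependent k x) :
    ∃ φ : adjoin k (Set.range v) →ₐ[k] C,
      ∀ b, φ ⟨v b, subset_adjoin k _ (Set.mem_range_self b)⟩ = x b := by
  refine ⟨(val _).comp (hv.aevalEquivField.symm.trans hx.aevalEquivField).toAlgHom, fun b => ?_⟩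
  have hvb : hv.aevalEquivField (algebraMap (MvPolynomial ι k) _ (.X b)) =
      ⟨v b, subset_adjoin k _ (Set.mem_range_self b)⟩ := Subtype.ext (by simp)
  rw [← hvb]
  simp

theorem exists_algHom_algEquiv_comm {F K C : Type*} [Field F] [Field K] [Field C] [Algebra F K]
    [Algebra F C] [Normal F K] [IsAlgClosed C] (σ : C ≃ₐ[F] C) :
    ∃ (f : K →ₐ[F] C) (τ : K ≃ₐ[F] K), ∀ y, f (τ y) = σ (f y) := by
  let f : K →ₐ[F] C := IsAlgClosed.lift
  let : Algebra K C := f.toAlgebra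
  have : IsScalarTower F K C := .of_algHom f
  exact ⟨f, σ.restrictNormal K, σ.restrictNormal_commutes K⟩

theorem exists_ringHom_ringAut_comm_of_isTranscendenceBasis {ι k K C : Type*} [Field k] [Field K]
    [Field C] [Algebra k K] [Algebra k C] [IsAlgClosed K] [IsAlgClosed C] {v : ι → K} {x : ι → C}
    (hv : IsTranscendenceBasis k v) (hx : AlgebraicIndependent k x) (σ : C ≃ₐ[k] C)
    (hσ : ∀ b, σ (x b) = x b) :
    ∃ (f : K →+* C) (τ : RingAut K), ∀ y, f (τ y) = σ (f y) := by
  obtain ⟨φ, hφ⟩ := exists_algHom_adjoin_of_algebraicIndependent hv.1 hx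
  have σ_comp_φ : σ.toAlgHom.comp φ = φ :=
    adjoin_algHom_ext k (by rintro _ ⟨b, rfl⟩; simp [hφ, hσ])
  let : Algebra (adjoin k (Set.range v)) C := φ.toAlgebra
  have : Algebra.IsAlgebraic (adjoin k (Set.range v)) K := hv.isAlgebraic_field
  have : IsAlgClosure (adjoin k (Set.range v)) K := ⟨inferInstance, inferInstance⟩
  have : Normal (adjoin k (Set.range v)) K := IsAlgClosure.normal _ K
  obtain ⟨f, τ, hf⟩ := exists_algHom_algEquiv_comm (K := K)
    (AlgEquiv.ofRingEquiv (f := σ.toRingEquiv) fun a => DFunLike.congr_fun σ_comp_φ a)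
  exact ⟨f, τ.toRingEquiv, hf⟩

/-- The automorphism of a ring of germs along `l` induced by an automorphism `e` of the coefficient
ring, acting pointwise on representatives. -/
def germMapRingAut {α R : Type*} [Mul R] [Add R] (l : Filter α) (e : RingAut R) :
    RingAut (Germ l R) where
  toFun := Germ.map e
  invFun := Germ.map e.symm
  left_inv z := z.inductionOn fun f => congrArg _ (funext fun a => e.symm_apply_apply (f a))
  right_inv z := z.inductionOn fun f => congrArg _ (funext fun a => e.apply_symm_apply (f a))
  map_mul' z w := z.inductionOn₂ w fun f g => congrArg _ (funext fun a => map_mul e (f a) (g a))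
  map_add' z w := z.inductionOn₂ w fun f g => congrArg _ (funext fun a => map_add e (f a) (g a))

@[simp]
theorem germMapRingAut_coe {α R : Type*} [Mul R] [Add R] (l : Filter α) (e : RingAut R)
    (f : α → R) :
    germMapRingAut l e (f : Germ l R) = ((fun a => e (f a) : α → R) : Germ l R) :=
  rfl

instance instCharZeroGerm {α R : Type*} [AddMonoidWithOne R] [CharZero R] (l : Filter α) [NeBot l] :
    CharZero (Germ l R) where
  cast_injective _ _ h := Nat.cast_injective (R := R) (Germ.const_inj.1 h)

theorem isAlgClosed_germ {α k : Type*} [Field k] [IsAlgClosed k] (𝓤 : Ultrafilter α) :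
    IsAlgClosed (Germ (𝓤 : Filter α) k) := by
  refine .of_exists_root _ fun p hp hirr => ?_
  obtain ⟨P, rfl, hdeg, hP⟩ := Polynomial.lifts_and_degree_eq_and_monic
    (f := Germ.coeRingHom (R := k) (𝓤 : Filter α))
    (Polynomial.map_surjective _ (fun z => z.inductionOn fun f => ⟨f, rfl⟩) p) hp
  have exists_root (a : α) : ∃ r, (P.map (Pi.evalRingHom _ a)).eval r = 0 :=
    IsAlgClosed.exists_root _ <| by
      rw [hP.degree_map, hdeg]
      exact (Polynomial.degree_pos_of_irreducible hirr).ne'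
  choose r hr using exists_root
  have hPr : P.eval r = 0 := funext fun a => by
    rw [Pi.zero_apply, ← hr a]
    exact (Polynomial.eval_map_apply (Pi.evalRingHom _ a) r).symm
  exact ⟨Germ.coeRingHom _ r, by rw [Polynomial.eval_map_apply, hPr, map_zero]⟩

theorem exists_ultrafilter_eventually_eval_ne_zero (ι R : Type*) [CommRing R] [IsDomain R]
    [Infinite R] :
    ∃ 𝓤 : Ultrafilter (ι → R), ∀ p : MvPolynomial ι R, p ≠ 0 → ∀ᶠ x in 𝓤, p.eval x ≠ 0 := by
  obtain ⟨𝓤, h𝓤⟩ := Ultrafilter.exists_ultrafilter_of_finite_inter_nonempty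
    ((fun p : MvPolynomial ι R => {x | p.eval x ≠ 0}) '' {p | p ≠ 0}) fun T hT => by
      classical
      obtain ⟨S, hS, rfl⟩ := Finset.subset_set_image_iff.1 hT
      obtain ⟨x, hx⟩ : ∃ x, (∏ p ∈ S, p).eval x ≠ 0 := by
        by_contra! h
        exact Finset.prod_ne_zero_iff.2 hS (MvPolynomial.funext (by simpa using h))
      exact ⟨x, by simpa [Finset.prod_ne_zero_iff] using hx⟩
  exact ⟨𝓤, fun p hp => h𝓤 ⟨p, hp, rfl⟩⟩

theorem algebraicIndependent_germ_coord {ι : Type*} (A : Type*) [Field A] [CharZero A]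
    {𝓤 : Ultrafilter (ι → ℚ)}
    (h𝓤 : ∀ p : MvPolynomial ι ℚ, p ≠ 0 → ∀ᶠ x in 𝓤, p.eval x ≠ 0) :
    AlgebraicIndependent ℚ
      fun b => ((fun x => (x b : A) : (ι → ℚ) → A) : Germ (𝓤 : Filter (ι → ℚ)) A) := by
  let coord (b : ι) : Germ (𝓤 : Filter (ι → ℚ)) A := ((fun x => (x b : A) : (ι → ℚ) → A) : Germ _ A)
  let evalGerm : MvPolynomial ι ℚ →+* Germ (𝓤 : Filter (ι → ℚ)) A :=
    (Germ.coeRingHom _).comp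
      (RingHom.pi fun x => (algebraMap ℚ A).comp (MvPolynomial.eval x))
  have aeval_eq : MvPolynomial.aeval coord = evalGerm.toRatAlgHom :=
    MvPolynomial.algHom_ext fun b => by
      rw [MvPolynomial.aeval_X]
      exact congrArg _ (funext fun x => by simp)
  rw [algebraicIndependent_iff]
  intro p hp
  by_contra hp0
  have eventually_eq_zero : ∀ᶠ x in 𝓤, algebraMap ℚ A (p.eval x) = 0 :=
    Germ.coe_eq.1 ((DFunLike.congr_fun aeval_eq p).symm.trans hp)
  obtain ⟨x, hx, hx0⟩ := ((h𝓤 p hp0).and eventually_eq_zero).exists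
  exact hx (by simpa using hx0)

theorem germMapRingAut_conj_ne_self {α : Type*} {l : Filter α} [NeBot l] {z : Germ l ℂ}
    (hz : z ^ 2 = -1) : germMapRingAut l starRingAut z ≠ z := by
  induction z using Germ.inductionOn with | _ f =>
  intro hconj
  obtain ⟨a, hsq, hreal⟩ := ((Germ.coe_eq.1 hz).and (Germ.coe_eq.1 hconj)).exists
  obtain ⟨r, hr⟩ := Complex.conj_eq_iff_real.1 hreal
  have : r ^ 2 = -1 := by
    have : f a ^ 2 = -1 := hsq
    rw [hr] at this
    exact_mod_cast this
  linarith [sq_nonneg r]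

theorem exists_ringAut_orderOf_eq_two (K : Type*) [Field K] [IsAlgClosed K] [CharZero K] :
    ∃ τ : RingAut K, orderOf τ = 2 := by
  obtain ⟨ι, v, hv⟩ := exists_isTranscendenceBasis' ℚ K
  obtain ⟨𝓤, h𝓤⟩ := exists_ultrafilter_eventually_eval_ne_zero ι ℚ
  have := isAlgClosed_germ (k := ℂ) 𝓤
  let conj := germMapRingAut (𝓤 : Filter (ι → ℚ)) (starRingAut (R := ℂ))
  have conj_conj (z) : conj (conj z) = z := z.inductionOn fun f => by simp [conj]
  obtain ⟨f, τ, hτ⟩ := exists_ringHom_ringAut_comm_of_isTranscendenceBasis hv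
    (algebraicIndependent_germ_coord ℂ h𝓤) (AlgEquiv.ofRingEquiv (f := conj) (by simp))
    fun b => by simp [conj]
  replace hτ (y) : f (τ y) = conj (f y) := hτ y
  obtain ⟨i, hi⟩ := IsAlgClosed.exists_pow_nat_eq (-1 : K) two_pos
  refine ⟨τ, orderOf_eq_prime (RingEquiv.ext fun y => f.injective ?_) fun hτ1 => ?_⟩
  · rw [sq, RingAut.mul_apply, hτ, hτ, conj_conj, RingAut.one_apply]
  · have conj_ne : conj (f i) ≠ f i :=
      germMapRingAut_conj_ne_self (by rw [← map_pow, hi, map_neg, map_one])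
    exact conj_ne (by rw [← hτ, hτ1, RingAut.one_apply])

theorem exists_index_two_subfield
    (K : Type*) [Field K] [IsAlgClosed K] [CharZero K] :
    ∃ F : Subfield K, F ≠ ⊤ ∧ Algebra.IsAlgebraic F K ∧ Module.finrank F K = 2 := by
  obtain ⟨τ, hτ⟩ := exists_ringAut_orderOf_eq_two K
  let F := FixedPoints.subfield (Subgroup.zpowers τ) K
  have hF : Module.finrank F K = 2 := by
    rw [finrank_fixedPoints_zpowers (orderOf_pos_iff.1 (by omega)), hτ]
  have : FiniteDimensional F K := .of_finrank_pos (by omega)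
  refine ⟨F, fun hF_top => ?_, inferInstance, hF⟩
  rw [hF_top, ← Subfield.relfinrank_top_right, Subfield.relfinrank_self] at hF
  omega
end
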